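/- arXiv:1707.05029 — 2 statements merged into one kernel-verified Lean document; each statement's English description precedes it below -/
import Mathlib

section
/- The ℤ-lattice of integral Cayley numbers 𝒪 spanned by the Coxeter basis e₀, e₁, e₂, e₄, (e₁+e₂+e₃−e₄)/2, (e₅−e₀−e₁−e₄)/2, (e₆−e₀+e₁−e₂)/2, (e₂−e₀+e₄−e₇)/2, equipped with the quadratic form N, is an even unimodular positive definite lattice of rank 8 (hence isometric to E₈). -/
open scoped BigOperators

/-- The Cayley numbers (octonions) as coordinate vectors w.r.t. the basis `e₀,…,e₇`. -/
abbrev Octo := Fin 8 → ℝ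

/-- Sign table of the octonion multiplication: `eᵢeⱼ = octSign i j • e_{octIdx i j}`. -/
def octSign : Matrix (Fin 8) (Fin 8) ℝ :=
  !![1, 1, 1, 1, 1, 1, 1, 1; 1, -1, 1, 1, -1, 1, -1, -1; 1, -1, -1, 1, 1, -1, 1, -1;
     1, -1, -1, -1, 1, 1, -1, 1; 1, 1, -1, -1, -1, 1, 1, -1; 1, -1, 1, -1, -1, -1, 1, 1;
     1, 1, -1, 1, -1, -1, -1, 1; 1, 1, 1, -1, 1, -1, -1, -1]

/-- Index table of the octonion multiplication. -/
def octIdx : Matrix (Fin 8) (Fin 8) (Fin 8) :=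
  !![0, 1, 2, 3, 4, 5, 6, 7; 1, 0, 4, 7, 2, 6, 5, 3; 2, 4, 0, 5, 1, 3, 7, 6;
     3, 7, 5, 0, 6, 2, 4, 1; 4, 2, 1, 6, 0, 7, 3, 5; 5, 6, 3, 2, 7, 0, 1, 4;
     6, 5, 7, 4, 3, 1, 0, 2; 7, 3, 6, 1, 5, 4, 2, 0]

/-- Octonion multiplication, given by the structure constants encoded in
`octSign` and `octIdx` (satisfying `e₁e₂e₄ = … = -e₀`). -/
def octMul (x y : Octo) : Octo := fun k =>
  ∑ i : Fin 8, ∑ j : Fin 8, x i * y j * octSign i j * (if octIdx i j = k then 1 else 0)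

/-- The basis vectors `e₀,…,e₇`. -/
def octE (i : Fin 8) : Octo := fun j => if j = i then 1 else 0

/-- The real part `Re(x) = x₀`. -/
def octRe (x : Octo) : ℝ := x 0

/-- The involution `x ↦ x̄ = 2 Re(x) e₀ - x`. -/
def octConj (x : Octo) : Octo := (2 * octRe x) • octE 0 - x

/-- The norm `N(x) = Σⱼ xⱼ²`. -/
def octN (x : Octo) : ℝ := ∑ j : Fin 8, (x j) ^ 2

/-- The bilinear form `σ(a,b) = āb + b̄a` (a real number, read off as the `e₀`-coordinate). -/
noncomputable def octSigma (a b : Octo) : ℝ :=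
  (octMul (octConj a) b + octMul (octConj b) a) 0

/-- The Coxeter basis of the integral Cayley numbers. -/
noncomputable def cox : Fin 8 → Octo :=
  ![octE 0, octE 1, octE 2, octE 4,
    (1 / 2 : ℝ) • (octE 1 + octE 2 + octE 3 - octE 4),
    (1 / 2 : ℝ) • (octE 5 - octE 0 - octE 1 - octE 4),
    (1 / 2 : ℝ) • (octE 6 - octE 0 + octE 1 - octE 2),
    (1 / 2 : ℝ) • (octE 2 - octE 0 + octE 4 - octE 7)]

/-- The lattice `𝒪` of integral Cayley numbers: the `ℤ`-span of the Coxeter basis. -/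
noncomputable def OLat : Submodule ℤ Octo := Submodule.span ℤ (Set.range cox)

/-!
Since `eᵢeⱼ` has a nonzero `e₀`-coordinate only for `i = j`, the form `σ` is twice the Euclidean
inner product, hence the polar form of `N`. Integrality of `N` on `𝒪` therefore only has to be
checked on the Coxeter basis, where `N` takes the value `1` and `σ` takes integer values. Twice the
Coxeter basis vectors are the rows of an integer matrix `A` with `A Aᵀ = 2 G`, where `G` is the Gram
matrix of `σ`. Exchanging two columns makes `A` lower triangular with diagonal product `-16`, so
`det A = 16` and `det G = 16² / 2⁸ = 1`.
-/

theorem quadraticMap_apply_mem_of_mem_span {R M N : Type*} [CommRing R] [AddCommGroup M]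
    [AddCommGroup N] [Module R M] [Module R N] (Q : QuadraticMap R M N) (P : Submodule R N)
    {s : Set M} (hQ : ∀ x ∈ s, Q x ∈ P)
    (hpolar : ∀ x ∈ s, ∀ y ∈ s, QuadraticMap.polar Q x y ∈ P) {v : M}
    (hv : v ∈ Submodule.span R s) : Q v ∈ P := by
  induction hv using Submodule.span_induction with
  | mem x hx => exact hQ x hx
  | zero => simp only [QuadraticMap.map_zero, P.zero_mem]
  | add x y hx hy hQx hQy =>
    have hxy : Q.polarBilin x y ∈ P :=
      LinearMap.BilinMap.apply_apply_mem_of_mem_span P s s Q.polarBilin hpolar x y hx hy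
    rw [QuadraticMap.map_add Q x y]
    exact P.add_mem (P.add_mem hQx hQy) hxy
  | smul a x _ hQx =>
    rw [QuadraticMap.map_smul]
    exact P.smul_mem _ hQx

section NormForm

theorem octIdx_eq_zero_iff (i j : Fin 8) : octIdx i j = 0 ↔ i = j := by
  fin_cases i <;> revert j <;> decide

theorem octSign_self (i : Fin 8) : octSign i i = if i = 0 then 1 else -1 := by
  fin_cases i <;> simp [octSign]

theorem octMul_apply_zero (x y : Octo) : octMul x y 0 = ∑ i, x i * y i * octSign i i := by
  simp only [octMul, octIdx_eq_zero_iff, mul_ite, mul_one, mul_zero, Finset.sum_ite_eq,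
    Finset.mem_univ, if_true]

theorem octConj_apply_mul_octSign (x : Octo) (i : Fin 8) : octConj x i * octSign i i = x i := by
  rcases eq_or_ne i 0 with rfl | hi
  · simp only [octSign_self, if_true, octConj, octRe, octE, Pi.sub_apply, Pi.smul_apply,
      smul_eq_mul]
    ring
  · simp [octSign_self, octConj, octE, hi]

theorem octMul_octConj_apply_zero (x y : Octo) : octMul (octConj x) y 0 = x ⬝ᵥ y := by
  simp only [octMul_apply_zero, mul_right_comm _ (y _), octConj_apply_mul_octSign, dotProduct]

theorem octSigma_eq_two_mul_dotProduct (x y : Octo) : octSigma x y = 2 * (x ⬝ᵥ y) := by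
  rw [octSigma, Pi.add_apply, octMul_octConj_apply_zero, octMul_octConj_apply_zero,
    dotProduct_comm y x, two_mul]

theorem octN_eq_dotProduct (x : Octo) : octN x = x ⬝ᵥ x := by
  simp only [octN, dotProduct, sq]

theorem octSigma_self (x : Octo) : octSigma x x = 2 * octN x := by
  rw [octSigma_eq_two_mul_dotProduct, octN_eq_dotProduct]

theorem octN_pos {x : Octo} (hx : x ≠ 0) : 0 < octN x := by
  rw [octN_eq_dotProduct]
  simpa only [star_trivial] using Matrix.dotProduct_star_self_pos_iff.mpr hx

/-- The norm `N` as a quadratic map over `ℤ`, the ring over which `OLat` is a lattice. -/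
noncomputable def octNQuadraticMap : QuadraticMap ℤ Octo ℝ :=
  LinearMap.BilinMap.toQuadraticMap (dotProductBilin ℤ ℤ)

theorem octNQuadraticMap_apply (x : Octo) : octNQuadraticMap x = octN x :=
  (octN_eq_dotProduct x).symm

theorem polar_octNQuadraticMap (x y : Octo) :
    QuadraticMap.polar octNQuadraticMap x y = octSigma x y := by
  rw [octSigma_eq_two_mul_dotProduct, two_mul]
  nth_rewrite 2 [dotProduct_comm]
  exact LinearMap.BilinMap.polar_toQuadraticMap x y

end NormForm

section CoxeterBasis

/-- The integer matrix whose rows are the coordinate vectors of `2 • cox i`; the factor `2` clears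
the denominators. -/
def twoCoxMatrix : Matrix (Fin 8) (Fin 8) ℤ :=
  !![ 2,  0,  0, 0,  0, 0, 0,  0;
      0,  2,  0, 0,  0, 0, 0,  0;
      0,  0,  2, 0,  0, 0, 0,  0;
      0,  0,  0, 0,  2, 0, 0,  0;
      0,  1,  1, 1, -1, 0, 0,  0;
     -1, -1,  0, 0, -1, 1, 0,  0;
     -1,  1, -1, 0,  0, 0, 1,  0;
     -1,  0,  1, 0,  1, 0, 0, -1]

/-- The Gram matrix of `σ` in the Coxeter basis, with integer entries. -/
def coxGram : Matrix (Fin 8) (Fin 8) ℤ :=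
  !![ 2,  0,  0,  0,  0, -1, -1, -1;
      0,  2,  0,  0,  1, -1,  1,  0;
      0,  0,  2,  0,  1,  0, -1,  1;
      0,  0,  0,  2, -1, -1,  0,  1;
      0,  1,  1, -1,  2,  0,  0,  0;
     -1, -1,  0, -1,  0,  2,  0,  0;
     -1,  1, -1,  0,  0,  0,  2,  0;
     -1,  0,  1,  1,  0,  0,  0,  2]

theorem of_cox_eq_smul_twoCoxMatrix :
    Matrix.of cox = (1 / 2 : ℝ) • twoCoxMatrix.map (Int.castRingHom ℝ) := by
  ext i j
  fin_cases i <;> fin_cases j <;> simp [cox, octE, twoCoxMatrix]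

theorem twoCoxMatrix_mul_transpose : twoCoxMatrix * twoCoxMatrix.transpose = 2 • coxGram := by
  decide

theorem det_twoCoxMatrix : twoCoxMatrix.det = 16 := by
  have hlower : (twoCoxMatrix.submatrix id (Equiv.swap 3 4)).IsLowerTriangular := by
    intro i j hij
    fin_cases i <;> revert j <;> decide
  calc twoCoxMatrix.det = -(twoCoxMatrix.submatrix id (Equiv.swap 3 4)).det := by
        rw [Matrix.det_permute', Equiv.Perm.sign_swap (by decide), Units.val_neg, Units.val_one,
          Int.cast_neg, Int.cast_one, neg_one_mul, neg_neg]
    _ = -∏ i, twoCoxMatrix.submatrix id (Equiv.swap 3 4) i i := by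
        rw [Matrix.det_of_isLowerTriangular _ hlower]
    _ = 16 := by decide

theorem det_coxGram : coxGram.det = 1 := by
  have hdet := congrArg Matrix.det twoCoxMatrix_mul_transpose
  rw [Matrix.det_mul, Matrix.det_transpose, det_twoCoxMatrix, ← Nat.cast_smul_eq_nsmul ℤ,
    Matrix.det_smul, Fintype.card_fin] at hdet
  push_cast at hdet
  linarith

theorem octSigma_cox_cox (i j : Fin 8) : octSigma (cox i) (cox j) = coxGram i j := by
  have hcox (k l : Fin 8) : cox k l = 1 / 2 * (twoCoxMatrix k l : ℝ) :=
    congrFun (congrFun of_cox_eq_smul_twoCoxMatrix k) l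
  have hgram : ∑ l, (twoCoxMatrix i l : ℝ) * twoCoxMatrix j l = 2 * coxGram i j := by
    have h := congrFun (congrFun twoCoxMatrix_mul_transpose i) j
    simp only [Matrix.mul_apply, Matrix.transpose_apply, Matrix.smul_apply, nsmul_eq_mul] at h
    exact_mod_cast h
  calc octSigma (cox i) (cox j)
      = 1 / 2 * ∑ l, (twoCoxMatrix i l : ℝ) * twoCoxMatrix j l := by
        rw [octSigma_eq_two_mul_dotProduct, dotProduct, Finset.mul_sum, Finset.mul_sum]
        refine Finset.sum_congr rfl fun l _ => ?_
        rw [hcox, hcox]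
        ring
    _ = coxGram i j := by rw [hgram]; ring

theorem octN_cox (i : Fin 8) : octN (cox i) = 1 := by
  have hdiag : coxGram i i = 2 := by
    revert i
    decide
  have h : 2 * octN (cox i) = 2 := by
    rw [← octSigma_self, octSigma_cox_cox, hdiag, Int.cast_ofNat]
  linarith

theorem linearIndependent_cox : LinearIndependent ℝ cox := by
  refine Matrix.linearIndependent_rows_of_det_ne_zero (A := Matrix.of cox) ?_
  have hdet : (twoCoxMatrix.map (Int.castRingHom ℝ)).det = 16 := by
    rw [← RingHom.mapMatrix_apply, ← RingHom.map_det, det_twoCoxMatrix]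
    norm_num
  rw [of_cox_eq_smul_twoCoxMatrix, Matrix.det_smul, hdet]
  norm_num

theorem det_octSigma_cox : (Matrix.of fun i j => octSigma (cox i) (cox j)).det = 1 := by
  have hgram : (Matrix.of fun i j => octSigma (cox i) (cox j)) =
      (Int.castRingHom ℝ).mapMatrix coxGram :=
    Matrix.ext octSigma_cox_cox
  rw [hgram, ← RingHom.map_det, det_coxGram, map_one]

theorem exists_int_octN_eq {v : Octo} (hv : v ∈ OLat) : ∃ k : ℤ, octN v = k := by
  have hmem : octNQuadraticMap v ∈ (1 : Submodule ℤ ℝ) := by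
    refine quadraticMap_apply_mem_of_mem_span octNQuadraticMap 1 ?_ ?_ hv
    · rintro _ ⟨i, rfl⟩
      rw [octNQuadraticMap_apply, octN_cox]
      exact Submodule.mem_one.mpr ⟨1, map_one _⟩
    · rintro _ ⟨i, rfl⟩ _ ⟨j, rfl⟩
      rw [polar_octNQuadraticMap, octSigma_cox_cox]
      exact Submodule.mem_one.mpr ⟨coxGram i j, rfl⟩
  obtain ⟨k, hk⟩ := Submodule.mem_one.mp hmem
  exact ⟨k, by rw [← octNQuadraticMap_apply, ← hk]; rfl⟩

end CoxeterBasis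

/-- The integral Cayley numbers `𝒪` with the quadratic form `N` form an even unimodular
positive definite lattice of rank 8: the Coxeter basis is linearly independent (rank 8),
`σ(v,v) = 2N(v)` is an even integer on `𝒪`, `N` is positive definite, and the Gram matrix
of `σ` in the Coxeter basis has determinant 1. -/
theorem OLat_even_unimodular_posDef :
    LinearIndependent ℝ cox ∧
    (∀ v ∈ OLat, ∃ k : ℤ, octSigma v v = 2 * (k : ℝ)) ∧
    (∀ v : Octo, v ≠ 0 → 0 < octN v) ∧
    Matrix.det (Matrix.of fun i j => octSigma (cox i) (cox j)) = 1 := by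
  refine ⟨linearIndependent_cox, fun v hv => ?_, fun v hv => octN_pos hv, det_octSigma_cox⟩
  obtain ⟨k, hk⟩ := exists_int_octN_eq hv
  exact ⟨k, by rw [octSigma_self, hk]⟩
end

section
/- The number of integral Cayley numbers of norm n equals 240·σ₃(n) for every positive integer n, where σ₃(n) = Σ_{d|n} d³. In particular, there are exactly 240 elements of norm 1. -/
open scoped BigOperators

/-!
Doubling identifies `𝒪` with the integer vectors that reduce modulo 2 to words of the extended
Hamming code, and multiplies the norm by 4. Summing `exp (πi τ v² / 2)` over these vectors gives
the weight enumerator `a⁸ + 14 a⁴ b⁴ + b⁸` of the code at `a = θ₃(2τ)`, `b = θ₂(2τ)`. Since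
`τ ↦ -1/τ` replaces `(a, b)` by a scalar multiple of `((a + b)/√2, (a - b)/√2)`, which preserves
the weight enumerator, the theta series is a level one modular form of weight 4 with constant
term 1. The only such form is the Eisenstein series `E₄`.
-/

open Complex Function Matrix.SpecialLinearGroup
open UpperHalfPlane hiding I
open scoped Real MatrixGroups ModularForm

/-! ### Sums and powers -/

theorem ofReal_mul_cpow {r : ℝ} (hr : 0 ≤ r) (z c : ℂ) : (r * z) ^ c = (r : ℂ) ^ c * z ^ c := by
  rcases eq_or_ne c 0 with rfl | hc
  · simp
  rcases hr.eq_or_lt with rfl | hr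
  · simp [hc]
  rcases eq_or_ne z 0 with rfl | hz
  · simp [hc]
  have hr' : (r : ℂ) ≠ 0 := ofReal_ne_zero.mpr hr.ne'
  rw [cpow_def_of_ne_zero (mul_ne_zero hr' hz), cpow_def_of_ne_zero hr', cpow_def_of_ne_zero hz,
    log_ofReal_mul hr hz, ofReal_log hr.le, add_mul, exp_add]

theorem summable_norm_prod_pi {R : Type*} [NormedCommRing R] {n : ℕ} {α : Fin n → Type*}
    {f : ∀ i, α i → R} (hf : ∀ i, Summable fun x => ‖f i x‖) :
    Summable fun v : ∀ i, α i => ‖∏ i, f i (v i)‖ := by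
  induction n with
  | zero => exact Summable.of_finite
  | succ n ih =>
    rw [← (Fin.consEquiv α).summable_iff]
    simpa [Function.comp_def, Fin.consEquiv, Fin.prod_univ_succ] using
      (hf 0).mul_norm (ih fun i => hf i.succ)

theorem hasSum_prod_pi {R : Type*} [NormedCommRing R] [CompleteSpace R] {n : ℕ}
    {α : Fin n → Type*} {f : ∀ i, α i → R} {s : Fin n → R} (hs : ∀ i, HasSum (f i) (s i))
    (hf : ∀ i, Summable fun x => ‖f i x‖) :
    HasSum (fun v : ∀ i, α i => ∏ i, f i (v i)) (∏ i, s i) := by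
  induction n with
  | zero => simp
  | succ n ih =>
    have hsum := ih (fun i => hs i.succ) fun i => hf i.succ
    have hmul := summable_mul_of_summable_norm (hf 0) (summable_norm_prod_pi fun i => hf i.succ)
    rw [← (Fin.consEquiv α).hasSum_iff]
    simpa [Function.comp_def, Fin.consEquiv, Fin.prod_univ_succ] using (hs 0).mul hsum hmul

theorem hasSum_ncard_fiber_smul {α β E : Type*} [AddCommMonoid E] [TopologicalSpace E]
    [ContinuousAdd E] [RegularSpace E] {S : Set α} {ν : α → β} {g : β → E} {a : E}
    (hfin : ∀ b, {x ∈ S | ν x = b}.Finite) (h : HasSum (S.indicator (g ∘ ν)) a) :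
    HasSum (fun b => {x ∈ S | ν x = b}.ncard • g b) a := by
  classical
  rw [← (Equiv.sigmaFiberEquiv ν).hasSum_iff] at h
  refine h.sigma fun b => ?_
  have hfiber : HasSum ({x ∈ S | ν x = b}.indicator fun _ => g b)
      ({x ∈ S | ν x = b}.ncard • g b) := by
    have hsum : HasSum ({x ∈ S | ν x = b}.indicator fun _ => g b)
        (∑ x ∈ (hfin b).toFinset, {x ∈ S | ν x = b}.indicator (fun _ => g b) x) :=
      hasSum_sum_of_ne_finset_zero fun x hx => Set.indicator_of_notMem (by simpa using hx) _
    rwa [Finset.sum_congr rfl fun x hx => Set.indicator_of_mem ((hfin b).mem_toFinset.mp hx) _,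
      Finset.sum_const, ← Set.ncard_eq_toFinset_card _ (hfin b)] at hsum
  have hindicator : {x ∈ S | ν x = b}.indicator (fun _ => g b) =
      {x | ν x = b}.indicator (S.indicator (g ∘ ν)) := by
    ext x
    by_cases hx : ν x = b <;> simp [Set.indicator_apply, hx]
  rw [hindicator] at hfiber
  exact hasSum_subtype_iff_indicator.mpr hfiber

/-! ### Binary codes and Construction A -/

theorem sum_sq_modEq_hammingNorm {ι : Type*} [Fintype ι] (v : ι → ℤ) :
    ∑ i, v i ^ 2 ≡ hammingNorm (fun i => (v i : ZMod 2)) [ZMOD 4] := by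
  rw [hammingNorm, Finset.card_filter, Nat.cast_sum]
  refine Int.ModEq.sum fun i _ => ?_
  rcases Int.even_or_odd (v i) with h | h
  · have hdvd : (4 : ℤ) ∣ v i ^ 2 := by simpa using pow_dvd_pow_of_dvd h.two_dvd 2
    simpa [ZMod.intCast_eq_zero_iff_even.mpr h] using Int.modEq_zero_iff_dvd.mpr hdvd
  · simpa [ZMod.intCast_eq_one_iff_odd.mpr h, Int.ModEq] using Int.sq_mod_four_eq_one_of_odd h

theorem finite_setOf_sum_sq_eq {ι : Type*} [Fintype ι] (N : ℤ) :
    {v : ι → ℤ | ∑ i, v i ^ 2 = N}.Finite := by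
  classical
  refine (Set.finite_Icc (fun _ => -N) (fun _ => N)).subset fun v hv => ?_
  have hle (i : ι) : v i ^ 2 ≤ N :=
    (Finset.single_le_sum (fun j _ => sq_nonneg (v j)) (Finset.mem_univ i)).trans_eq hv
  exact ⟨fun i => by nlinarith [hle i, Int.le_self_sq (-v i)],
    fun i => (Int.le_self_sq (v i)).trans (hle i)⟩

/-- Binary codes of length `n`, not necessarily linear. -/
abbrev BinaryCode (n : ℕ) := Finset (Fin n → ZMod 2)

namespace BinaryCode

variable {n : ℕ} (C : BinaryCode n)

/-- The homogeneous weight enumerator `∑ a ^ (n - wt c) * b ^ wt c` over the words `c` of `C`,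
written as a product over coordinates so that no subtraction occurs. -/
def weightEnumerator {R : Type*} [CommSemiring R] (a b : R) : R :=
  ∑ c ∈ C, ∏ i, if c i = 0 then a else b

theorem weightEnumerator_mul_left {R : Type*} [CommSemiring R] (s a b : R) :
    C.weightEnumerator (s * a) (s * b) = s ^ n * C.weightEnumerator a b := by
  simp only [weightEnumerator, ← mul_ite, Finset.prod_mul_distrib, Finset.mul_sum,
    Finset.prod_const, Finset.card_univ, Fintype.card_fin]

/-- All weights are divisible by 4. -/
def IsDoublyEven : Prop := ∀ c ∈ C, 4 ∣ hammingNorm c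

/-- The weight enumerator is fixed by the MacWilliams transform, as is the case for every linear
self-dual code. -/
def IsFormallySelfDual : Prop :=
  ∀ a b : ℂ, C.weightEnumerator ((a + b) / √2) ((a - b) / √2) = C.weightEnumerator a b

/-- The integer vectors that reduce modulo 2 to a word of `C`; Construction A without the
customary scaling by `1 / √2`. -/
def constructionA : Set (Fin n → ℤ) := {v | (fun i => (v i : ZMod 2)) ∈ C}

/-- The vectors of squared length `4 * m` in Construction A. -/
def shell (m : ℕ) : Set (Fin n → ℤ) := {v ∈ C.constructionA | ∑ i, v i ^ 2 = 4 * (m : ℤ)}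

variable {C}

theorem finite_shell (m : ℕ) : (C.shell m).Finite :=
  (finite_setOf_sum_sq_eq _).subset fun _ hv => hv.2

theorem shell_zero (h0 : 0 ∈ C) : C.shell 0 = {0} := by
  ext v
  constructor
  · rintro ⟨-, hv⟩
    rw [Nat.cast_zero, mul_zero, Finset.sum_eq_zero_iff_of_nonneg fun i _ => sq_nonneg _] at hv
    ext i
    simpa using hv i (Finset.mem_univ i)
  · rintro rfl
    refine ⟨?_, by simp⟩
    simpa [constructionA, ← Pi.zero_def] using h0

theorem IsDoublyEven.four_dvd_sum_sq (hC : C.IsDoublyEven) {v : Fin n → ℤ}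
    (hv : v ∈ C.constructionA) : 4 ∣ ∑ i, v i ^ 2 :=
  ((sum_sq_modEq_hammingNorm v).dvd_iff).mpr (mod_cast hC _ hv)

theorem IsDoublyEven.shell_eq (hC : C.IsDoublyEven) (m : ℕ) :
    C.shell m = {v ∈ C.constructionA | (∑ i, v i ^ 2).toNat / 4 = m} := by
  ext v
  refine and_congr_right fun hv => ?_
  have hdvd := hC.four_dvd_sum_sq hv
  have hnonneg : 0 ≤ ∑ i, v i ^ 2 := Finset.sum_nonneg fun i _ => sq_nonneg _
  omega

end BinaryCode

/-! ### The theta series of a binary code -/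

/-- `θ₃(2τ)`, the sum of `exp (πi τ x² / 2)` over even integers `x`. -/
noncomputable def thetaEven (τ : ℂ) : ℂ := jacobiTheta (2 * τ)

/-- `θ₂(2τ)`, the sum of `exp (πi τ x² / 2)` over odd integers `x`, as a difference of the sums
over all and over even integers. -/
noncomputable def thetaOdd (τ : ℂ) : ℂ := jacobiTheta (τ / 2) - jacobiTheta (2 * τ)

theorem hasSum_jacobiTheta {τ : ℂ} (hτ : 0 < τ.im) :
    HasSum (fun x : ℤ => cexp (π * I * x ^ 2 * τ)) (jacobiTheta τ) := by
  simpa [jacobiTheta_eq_jacobiTheta₂, jacobiTheta₂_term] using hasSum_jacobiTheta₂_term 0 hτ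

theorem hasSum_thetaEven {τ : ℂ} (hτ : 0 < τ.im) :
    HasSum (fun x : ℤ => if Even x then cexp (π * I * x ^ 2 * (τ / 2)) else 0) (thetaEven τ) := by
  have hinj : Injective fun x : ℤ => 2 * x := mul_right_injective₀ two_ne_zero
  rw [thetaEven, ← hinj.hasSum_iff fun x hx => if_neg fun h => hx ?_]
  · convert hasSum_jacobiTheta (τ := 2 * τ) (by simpa using hτ) using 2 with x
    simp only [Function.comp_apply, even_two_mul, if_true]
    push_cast
    ring_nf
  · exact h.two_dvd.imp fun y hy => hy.symm

theorem hasSum_thetaOdd {τ : ℂ} (hτ : 0 < τ.im) :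
    HasSum (fun x : ℤ => if Even x then 0 else cexp (π * I * x ^ 2 * (τ / 2))) (thetaOdd τ) := by
  have hsub (x : ℤ) : (if Even x then 0 else cexp (π * I * x ^ 2 * (τ / 2))) =
      cexp (π * I * x ^ 2 * (τ / 2)) - if Even x then cexp (π * I * x ^ 2 * (τ / 2)) else 0 := by
    split_ifs <;> simp
  simp only [hsub]
  exact (hasSum_jacobiTheta (by simpa using hτ)).sub (hasSum_thetaEven hτ)

theorem hasSum_theta_residue {τ : ℂ} (hτ : 0 < τ.im) (c : ZMod 2) :
    HasSum (fun x : ℤ => if (x : ZMod 2) = c then cexp (π * I * x ^ 2 * (τ / 2)) else 0)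
      (if c = 0 then thetaEven τ else thetaOdd τ) := by
  obtain rfl | rfl : c = 0 ∨ c = 1 := by revert c; decide
  · simpa [ZMod.intCast_eq_zero_iff_even] using hasSum_thetaEven hτ
  · simpa [ZMod.intCast_eq_one_iff_odd, ← Int.not_even_iff_odd] using hasSum_thetaOdd hτ

theorem jacobiTheta_neg_one_div {τ : ℂ} (hτ : 0 < τ.im) :
    jacobiTheta (-1 / τ) = (-I * τ) ^ (1 / 2 : ℂ) * jacobiTheta τ := by
  have h := jacobiTheta_S_smul ⟨τ, hτ⟩
  rw [modular_S_smul] at h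
  simpa [neg_div, inv_neg] using h

theorem jacobiTheta_neg_one_div_ofReal_mul {τ : ℂ} (hτ : 0 < τ.im) {r : ℝ} (hr : 0 < r) :
    jacobiTheta (-1 / (r * τ)) = √r * (-I * τ) ^ (1 / 2 : ℂ) * jacobiTheta (r * τ) := by
  rw [jacobiTheta_neg_one_div (by simpa using mul_pos hr hτ), mul_left_comm,
    ofReal_mul_cpow hr.le, Real.sqrt_eq_rpow, ofReal_cpow hr.le]
  norm_num

theorem thetaEven_neg_one_div {τ : ℂ} (hτ : 0 < τ.im) :
    thetaEven (-1 / τ) = (-I * τ) ^ (1 / 2 : ℂ) * ((thetaEven τ + thetaOdd τ) / √2) := by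
  have h := jacobiTheta_neg_one_div_ofReal_mul hτ (r := 1 / 2) (by norm_num)
  have harg : -1 / (((1 / 2 : ℝ) : ℂ) * τ) = 2 * (-1 / τ) := by
    push_cast
    field_simp
  rw [harg, Real.sqrt_div zero_le_one, Real.sqrt_one] at h
  rw [thetaEven, h, thetaEven, thetaOdd]
  push_cast
  ring_nf

theorem thetaOdd_neg_one_div {τ : ℂ} (hτ : 0 < τ.im) :
    thetaOdd (-1 / τ) = (-I * τ) ^ (1 / 2 : ℂ) * ((thetaEven τ - thetaOdd τ) / √2) := by
  have hall := jacobiTheta_neg_one_div_ofReal_mul hτ (r := 2) (by norm_num)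
  have harg : -1 / (((2 : ℝ) : ℂ) * τ) = -1 / τ / 2 := by
    push_cast
    field_simp
  have hsqrt : ((√2 : ℝ) : ℂ) ^ 2 = 2 := by exact_mod_cast Real.sq_sqrt zero_le_two
  have hsqrt0 : ((√2 : ℝ) : ℂ) ≠ 0 := by simp
  rw [harg] at hall
  have heven := thetaEven_neg_one_div hτ
  rw [thetaEven] at heven
  rw [thetaOdd, hall, heven, ofReal_ofNat, ← thetaEven]
  field_simp
  rw [hsqrt]
  ring

namespace BinaryCode

variable {n : ℕ} (C : BinaryCode n)

/-- The theta series `∑ exp (πi τ ‖v‖² / 2)` over the vectors `v` of Construction A, in terms of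
the weight enumerator; the two are identified by `hasSum_theta`. -/
noncomputable def theta (τ : ℂ) : ℂ := C.weightEnumerator (thetaEven τ) (thetaOdd τ)

variable {C}

theorem hasSum_theta {τ : ℂ} (hτ : 0 < τ.im) :
    HasSum (C.constructionA.indicator fun v => cexp (π * I * (∑ i, v i ^ 2 : ℤ) * (τ / 2)))
      (C.theta τ) := by
  classical
  have hcoset (c : Fin n → ZMod 2) := hasSum_prod_pi (fun i => hasSum_theta_residue hτ (c i))
    fun i => (hasSum_theta_residue hτ (c i)).summable.norm
  have hmem (v : Fin n → ℤ) (c : Fin n → ZMod 2) :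
      (∀ i ∈ Finset.univ, (v i : ZMod 2) = c i) ↔ (fun i => (v i : ZMod 2)) = c := by
    simp [funext_iff]
  have hterm (v : Fin n → ℤ) :
      C.constructionA.indicator (fun v => cexp (π * I * (∑ i, v i ^ 2 : ℤ) * (τ / 2))) v =
        ∑ c ∈ C, ∏ i, if (v i : ZMod 2) = c i then cexp (π * I * v i ^ 2 * (τ / 2)) else 0 := by
    simp only [Finset.prod_ite_zero, hmem, Finset.sum_ite_eq, Set.indicator_apply, constructionA,
      Set.mem_ofPred_eq, ← exp_sum, ← Finset.sum_mul, ← Finset.mul_sum, Int.cast_sum, Int.cast_pow]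
  rw [funext hterm]
  exact hasSum_sum fun c _ => hcoset c

theorem IsDoublyEven.hasSum_ncard_shell (hC : C.IsDoublyEven) {τ : ℂ} (hτ : 0 < τ.im) :
    HasSum (fun m => ((C.shell m).ncard : ℂ) • Periodic.qParam 1 τ ^ m) (C.theta τ) := by
  simp only [Nat.cast_smul_eq_nsmul, hC.shell_eq]
  refine hasSum_ncard_fiber_smul (fun m => hC.shell_eq m ▸ finite_shell m) ?_
  convert hasSum_theta hτ using 1
  refine Set.indicator_congr fun v hv => ?_
  obtain ⟨m, hm⟩ := hC.four_dvd_sum_sq hv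
  lift m to ℕ using by
    have hnonneg : 0 ≤ ∑ i, v i ^ 2 := Finset.sum_nonneg fun i _ => sq_nonneg _
    omega
  have hdiv : (4 * (m : ℤ)).toNat / 4 = m := by omega
  rw [Function.comp_apply, hm, hdiv, Periodic.qParam, ← exp_nat_mul]
  push_cast
  ring_nf

theorem IsFormallySelfDual.theta_neg_one_div (hC : C.IsFormallySelfDual) {τ : ℂ}
    (hτ : 0 < τ.im) : C.theta (-1 / τ) = ((-I * τ) ^ (1 / 2 : ℂ)) ^ n * C.theta τ := by
  rw [theta, thetaEven_neg_one_div hτ, thetaOdd_neg_one_div hτ, weightEnumerator_mul_left, hC,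
    theta]

theorem IsDoublyEven.theta_one_add (hC : C.IsDoublyEven) {τ : ℂ} (hτ : 0 < τ.im) :
    C.theta (1 + τ) = C.theta τ := by
  have hq : Periodic.qParam 1 (1 + τ) = Periodic.qParam 1 τ := by
    rw [Periodic.qParam, Periodic.qParam, ← exp_periodic (2 * π * I * τ / (1 : ℝ))]
    push_cast
    ring_nf
  refine (hC.hasSum_ncard_shell (τ := 1 + τ) (by simpa using hτ)).unique ?_
  simpa only [hq] using hC.hasSum_ncard_shell hτ

theorem differentiableAt_theta {τ : ℂ} (hτ : 0 < τ.im) : DifferentiableAt ℂ C.theta τ := by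
  have heven : DifferentiableAt ℂ thetaEven τ :=
    (differentiableAt_jacobiTheta (by simpa using hτ)).comp τ (by fun_prop)
  have hall : DifferentiableAt ℂ (fun τ => jacobiTheta (τ / 2)) τ :=
    (differentiableAt_jacobiTheta (by simpa using hτ)).comp τ (by fun_prop)
  have hodd : DifferentiableAt ℂ thetaOdd τ := hall.sub heven
  refine DifferentiableAt.fun_sum fun c _ => DifferentiableAt.fun_finsetProd fun i _ => ?_
  split_ifs <;> assumption

theorem IsFormallySelfDual.theta_slash_S (hC : C.IsFormallySelfDual) {k : ℕ} (hn : n = 2 * k)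
    (hk : 4 ∣ k) :
    (fun τ : ℍ => C.theta τ) ∣[(k : ℤ)] ModularGroup.S = fun τ : ℍ => C.theta τ := by
  ext τ
  have hroot : ((-I * (τ : ℂ)) ^ (1 / 2 : ℂ)) ^ n = τ ^ k := by
    obtain ⟨j, rfl⟩ := hk
    rw [hn, pow_mul, ← cpow_nat_mul, pow_mul, pow_mul]
    norm_num [mul_pow]
  have hS := hC.theta_neg_one_div τ.im_pos
  rw [hroot, neg_div, one_div, ← inv_neg] at hS
  rw [SlashInvariantForm.slash_S_apply]
  simp only [hS, zpow_neg, zpow_natCast]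
  field_simp [τ.ne_zero]

theorem IsDoublyEven.theta_slash_T (hC : C.IsDoublyEven) (k : ℤ) :
    (fun τ : ℍ => C.theta τ) ∣[k] ModularGroup.T = fun τ : ℍ => C.theta τ := by
  ext τ
  have hdenom : denom ModularGroup.T τ = 1 := by
    rw [ModularGroup.denom_apply]
    simp [ModularGroup.T]
  rw [ModularForm.SL_slash_apply, hdenom, one_zpow, mul_one, modular_T_smul, coe_vadd, ofReal_one,
    hC.theta_one_add τ.im_pos]

/-- The theta series of a formally self-dual doubly even code of length `2 * k` as a modular form
of weight `k`. -/
noncomputable def thetaForm {k : ℕ} (hn : n = 2 * k) (hk : 4 ∣ k) (hde : C.IsDoublyEven)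
    (hsd : C.IsFormallySelfDual) : ModularForm 𝒮ℒ k where
  toFun τ := C.theta τ
  slash_action_eq' A hA := by
    obtain ⟨A, rfl⟩ := hA
    exact SlashInvariantForm.slash_action_generators_SL2Z (hsd.theta_slash_S hn hk)
      (hde.theta_slash_T k) A
  holo' := by
    rw [mdifferentiable_iff]
    have hdiff : DifferentiableOn ℂ C.theta {z | 0 < z.im} := fun z hz =>
      (differentiableAt_theta hz).differentiableWithinAt
    refine hdiff.congr fun z hz => ?_
    simp [ofComplex_apply_of_im_pos hz]
  bdd_at_cusps' hc := by
    rw [Subgroup.IsArithmetic.isCusp_iff_isCusp_SL2Z] at hc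
    rw [OnePoint.isBoundedAt_iff_forall_SL2Z hc]
    intro A _
    rw [SlashInvariantForm.slash_action_generators_SL2Z (hsd.theta_slash_S hn hk)
      (hde.theta_slash_T k)]
    exact isBoundedAtImInfty_of_hasSum_qExpansion one_pos fun τ => hde.hasSum_ncard_shell τ.im_pos

theorem coeff_qExpansion_thetaForm {k : ℕ} (hn : n = 2 * k) (hk : 4 ∣ k) (hde : C.IsDoublyEven)
    (hsd : C.IsFormallySelfDual) (m : ℕ) :
    (qExpansion 1 (thetaForm hn hk hde hsd)).coeff m = (C.shell m).ncard :=
  (ModularFormClass.qExpansion_coeff_unique (f := thetaForm hn hk hde hsd) one_pos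
    one_mem_strictPeriods_SL (fun τ => hde.hasSum_ncard_shell τ.im_pos) m).symm

end BinaryCode

theorem eq_coeff_zero_smul_E {k : ℕ} (hk : 3 ≤ k) (hk_even : Even k) (hk_lt : k < 12)
    (f : ModularForm 𝒮ℒ k) : f = (qExpansion 1 f).coeff 0 • ModularForm.E hk := by
  rw [← sub_eq_zero]
  refine ModularForm.sturm_bound_levelOne_nat ?_
  rw [Nat.div_eq_of_lt hk_lt, Nat.cast_zero]
  refine zero_lt_one.trans_le (PowerSeries.one_le_order_iff_constCoeff_eq_zero.mpr ?_)
  rw [← PowerSeries.coeff_zero_eq_constantCoeff_apply, FunLike.coe_sub,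
    ModularForm.qExpansion_sub one_pos one_mem_strictPeriods_SL, FunLike.coe_smul,
    ModularForm.qExpansion_smul one_pos one_mem_strictPeriods_SL, map_sub, PowerSeries.coeff_smul,
    EisensteinSeries.E_qExpansion_coeff_zero hk hk_even, smul_eq_mul, mul_one, sub_self]

namespace BinaryCode

theorem ncard_shell_eq_sigma {C : BinaryCode 8} (h0 : 0 ∈ C) (hde : C.IsDoublyEven)
    (hsd : C.IsFormallySelfDual) {m : ℕ} (hm : m ≠ 0) :
    (C.shell m).ncard = 240 * ArithmeticFunction.sigma 3 m := by
  have hcoeff := coeff_qExpansion_thetaForm (k := 4) rfl dvd_rfl hde hsd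
  have hE : thetaForm (k := 4) rfl dvd_rfl hde hsd = ModularForm.E₄ := by
    rw [eq_coeff_zero_smul_E (by norm_num) (by decide) (by norm_num) (thetaForm _ _ _ _), hcoeff,
      shell_zero h0]
    simp
  have hB : bernoulli 4 = -1 / 30 := by
    rw [bernoulli_eq_bernoulli'_of_ne_one (by norm_num), bernoulli'_four]
  have h := hcoeff m
  rw [hE, EisensteinSeries.E_qExpansion_coeff (by norm_num) (by decide), if_neg hm, hB] at h
  norm_num at h
  exact_mod_cast h.symm

end BinaryCode

/-! ### The extended Hamming code and the integral Cayley numbers -/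

/-- Systematic encoder, with the message in coordinates 3, 5, 6, 7. -/
def hammingEncode (x : ZMod 2 × ZMod 2 × ZMod 2 × ZMod 2) : Fin 8 → ZMod 2 :=
  let (a, b, c, d) := x
  ![b + c + d, a + b + c, a + c + d, a, a + b + d, b, c, d]

theorem hammingEncode_injective : Injective hammingEncode := by decide

/-- The extended binary Hamming code of parameters `[8, 4, 4]`, with the coordinates ordered so
that Construction A yields the doubles of the integral Cayley numbers. -/
def hammingCode : BinaryCode 8 := Finset.univ.image hammingEncode

theorem zero_mem_hammingCode : 0 ∈ hammingCode := Finset.mem_image.mpr ⟨0, by decide⟩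

theorem hammingCode_isDoublyEven : hammingCode.IsDoublyEven := by
  simp only [BinaryCode.IsDoublyEven, hammingCode, Finset.forall_mem_image]
  decide

theorem weightEnumerator_hammingCode {R : Type*} [CommSemiring R] (a b : R) :
    hammingCode.weightEnumerator a b = a ^ 8 + 14 * a ^ 4 * b ^ 4 + b ^ 8 := by
  have hsum (f : ZMod 2 → R) : ∑ x, f x = f 0 + f 1 := Fin.sum_univ_two f
  rw [BinaryCode.weightEnumerator, hammingCode, Finset.sum_image hammingEncode_injective.injOn]
  simp only [Fintype.sum_prod_type, hsum, Fin.prod_univ_eight, hammingEncode]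
  simp only [add_zero, zero_add, CharTwo.add_self_eq_zero, Matrix.cons_val, one_ne_zero, if_true,
    if_false]
  ring

theorem hammingCode_isFormallySelfDual : hammingCode.IsFormallySelfDual := fun a b => by
  have hsqrt : ((√2 : ℝ) : ℂ) ^ 2 = 2 := by exact_mod_cast Real.sq_sqrt zero_le_two
  have hsqrt4 : ((√2 : ℝ) : ℂ) ^ 4 = 4 := by rw [pow_mul _ 2 2, hsqrt]; norm_num
  have hsqrt8 : ((√2 : ℝ) : ℂ) ^ 8 = 16 := by rw [pow_mul _ 2 4, hsqrt]; norm_num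
  simp only [weightEnumerator_hammingCode, div_pow, hsqrt4, hsqrt8]
  ring

theorem mem_hammingCode {c : Fin 8 → ZMod 2} :
    c ∈ hammingCode ↔ c 0 = c 5 + c 6 + c 7 ∧ c 1 = c 3 + c 5 + c 6 ∧
      c 2 = c 3 + c 6 + c 7 ∧ c 4 = c 3 + c 5 + c 7 := by
  rw [hammingCode, Finset.mem_image]
  constructor
  · rintro ⟨x, -, rfl⟩
    revert x
    decide
  · rintro ⟨h0, h1, h2, h4⟩
    refine ⟨(c 3, c 5, c 6, c 7), Finset.mem_univ _, ?_⟩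
    ext i
    fin_cases i
    exacts [h0.symm, h1.symm, h2.symm, rfl, h4.symm, rfl, rfl, rfl]

theorem mem_constructionA_hammingCode {v : Fin 8 → ℤ} :
    v ∈ hammingCode.constructionA ↔
      v 0 ≡ v 5 + v 6 + v 7 [ZMOD 2] ∧ v 1 ≡ v 3 + v 5 + v 6 [ZMOD 2] ∧
      v 2 ≡ v 3 + v 6 + v 7 [ZMOD 2] ∧ v 4 ≡ v 3 + v 5 + v 7 [ZMOD 2] := by
  simp only [BinaryCode.constructionA, Set.mem_ofPred_eq, mem_hammingCode, ← Int.cast_add,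
    ZMod.intCast_eq_intCast_iff, Nat.cast_ofNat]

/-- The octonion with coordinates `v i / 2`. -/
noncomputable def octHalf (v : Fin 8 → ℤ) : Octo := fun i => (v i : ℝ) / 2

theorem octHalf_injective : Injective octHalf := fun v w h => by
  ext i
  simpa [octHalf] using congrFun h i

theorem octN_octHalf (v : Fin 8 → ℤ) : octN (octHalf v) = (∑ i, v i ^ 2 : ℤ) / 4 := by
  simp only [octN, octHalf, div_pow, ← Finset.sum_div]
  push_cast
  norm_num

/-- Twice the coordinates of the octonion with coefficients `k` in the Coxeter basis. -/
def coxDouble (k : Fin 8 → ℤ) : Fin 8 → ℤ :=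
  ![2 * k 0 - k 5 - k 6 - k 7, 2 * k 1 + k 4 - k 5 + k 6, 2 * k 2 + k 4 - k 6 + k 7, k 4,
    2 * k 3 - k 4 - k 5 + k 7, k 5, k 6, -k 7]

theorem sum_smul_cox (k : Fin 8 → ℤ) : ∑ i, k i • cox i = octHalf (coxDouble k) := by
  ext j
  fin_cases j <;> simp [Fin.sum_univ_eight, cox, octE, octHalf, coxDouble] <;> ring

theorem range_coxDouble : Set.range coxDouble = hammingCode.constructionA := by
  ext v
  rw [mem_constructionA_hammingCode]
  simp only [Int.ModEq]
  constructor
  · rintro ⟨k, rfl⟩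
    simp only [coxDouble, Matrix.cons_val]
    omega
  · rintro ⟨h0, h1, h2, h4⟩
    refine ⟨![(v 0 + v 5 + v 6 - v 7) / 2, (v 1 - v 3 + v 5 - v 6) / 2,
      (v 2 - v 3 + v 6 + v 7) / 2, (v 4 + v 3 + v 5 + v 7) / 2, v 3, v 5, v 6, -v 7], ?_⟩
    ext i
    fin_cases i <;>
      simp only [coxDouble, Matrix.cons_val, Fin.zero_eta, Fin.mk_one, Fin.reduceFinMk] <;> omega

theorem coe_OLat : (OLat : Set Octo) = octHalf '' hammingCode.constructionA := by
  ext t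
  simp only [OLat, SetLike.mem_coe, Submodule.mem_span_range_iff_exists_fun, sum_smul_cox,
    ← range_coxDouble, Set.mem_image, Set.exists_range_iff]

theorem setOf_mem_OLat_octN_eq (m : ℕ) :
    {t : Octo | t ∈ OLat ∧ octN t = m} = octHalf '' hammingCode.shell m := by
  have hnorm (v : Fin 8 → ℤ) : octN (octHalf v) = m ↔ ∑ i, v i ^ 2 = 4 * (m : ℤ) := by
    rw [octN_octHalf, div_eq_iff (by norm_num), mul_comm]
    exact_mod_cast Iff.rfl
  have hsep : {t : Octo | t ∈ OLat ∧ octN t = m} = (OLat : Set Octo) ∩ {t | octN t = m} := rfl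
  rw [hsep, coe_OLat, ← Set.image_inter_preimage]
  simp only [Set.preimage_ofPred_eq, hnorm]
  rfl

/-- The number of integral Cayley numbers of norm `n` is `240·σ₃(n)` for every `n ≥ 1`;
in particular there are exactly 240 elements of norm 1. -/
theorem card_OLat_norm_eq :
    (∀ n : ℕ, 0 < n →
      {t : Octo | t ∈ OLat ∧ octN t = n}.ncard = 240 * ∑ d ∈ n.divisors, d ^ 3) ∧
    {t : Octo | t ∈ OLat ∧ octN t = 1}.ncard = 240 := by
  have hcard (n : ℕ) (hn : 0 < n) :
      {t : Octo | t ∈ OLat ∧ octN t = n}.ncard = 240 * ∑ d ∈ n.divisors, d ^ 3 := by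
    rw [setOf_mem_OLat_octN_eq, Set.ncard_image_of_injective _ octHalf_injective,
      BinaryCode.ncard_shell_eq_sigma zero_mem_hammingCode hammingCode_isDoublyEven
        hammingCode_isFormallySelfDual hn.ne', ArithmeticFunction.sigma_apply]
  exact ⟨hcard, by simpa using hcard 1 one_pos⟩
end
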